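/- Let S be a stream of N items and run the Misra-Gries algorithm with capacity k on S. Then the number of decrement steps performed during the entire run is at most ⌊N/(k+1)⌋; in particular, when k = ⌈1/ε⌉ for a real ε with 1/N ≤ ε ≤ 1, the number of decrement steps is strictly less than εN. -/

import Mathlib

/-!
Misra-Gries algorithm with capacity `k` over a stream `S : List U`,
together with a counter for the number of decrement steps performed.
-/

/-- One step of the Misra-Gries algorithm with capacity `k`. -/
def mgStep {U : Type*} [Fintype U] [DecidableEq U] (k : ℕ) (C : U → ℕ) (a : U) : U → ℕ :=
  if 0 < C a then
    Function.update C a (C a + 1)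
  else if (Finset.univ.filter fun y => 0 < C y).card < k then
    Function.update C a 1
  else
    fun y => C y - 1

/-- The number of decrement steps performed by the Misra-Gries algorithm with
capacity `k`, starting from table `C`, while processing the stream. -/
def mgDecs {U : Type*} [Fintype U] [DecidableEq U] (k : ℕ) : (U → ℕ) → List U → ℕ
  | _, [] => 0
  | C, a :: rest =>
      (if 0 < C a ∨ (Finset.univ.filter fun y => 0 < C y).card < k then 0 else 1)
        + mgDecs k (mgStep k C a) rest

theorem mg_sum_update {U : Type*} [Fintype U] [DecidableEq U] (C : U → ℕ) (a : U) :
    ∑ y, Function.update C a (C a + 1) y = ∑ y, C y + 1 := by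
  rw [Finset.sum_update_of_mem (Finset.mem_univ a),
    ← Finset.add_sum_erase Finset.univ C (Finset.mem_univ a), Finset.sdiff_singleton_eq_erase]
  ring

theorem mg_sum_dec {U : Type*} [Fintype U] (C : U → ℕ) :
    ∑ y, (C y - 1) + (Finset.univ.filter fun y => 0 < C y).card = ∑ y, C y := by
  rw [Finset.card_filter, ← Finset.sum_add_distrib]
  refine Finset.sum_congr rfl fun y _ => ?_
  split_ifs <;> omega

theorem mg_invariant {U : Type*} [Fintype U] [DecidableEq U] (k : ℕ) (S : List U) :
    ∀ C : U → ℕ, mgDecs k C S * (k + 1) ≤ S.length + ∑ y, C y := by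
  induction S with
  | nil => intro C; simp [mgDecs]
  | cons a rest ih =>
    intro C
    have h := ih (mgStep k C a)
    have hu := mg_sum_update C a
    have hd := mg_sum_dec C
    rw [mgDecs, List.length_cons]
    by_cases h1 : 0 < C a
    · have e : mgStep k C a = Function.update C a (C a + 1) := by simp only [mgStep, if_pos h1]
      rw [if_pos (Or.inl h1)]
      rw [e] at h ⊢
      rw [hu] at h
      rw [zero_add]
      omega
    · by_cases h2 : (Finset.univ.filter fun y => 0 < C y).card < k
      · have h0 : C a = 0 := by omega
        have e : mgStep k C a = Function.update C a (C a + 1) := by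
          rw [mgStep, if_neg h1, if_pos h2, h0]
        rw [if_pos (Or.inr h2)]
        rw [e] at h ⊢
        rw [hu] at h
        rw [zero_add]
        omega
      · have e : mgStep k C a = fun y => C y - 1 := by
          simp only [mgStep, if_neg h1, if_neg h2]
        rw [if_neg (by tauto)]
        rw [e] at h ⊢
        rw [add_mul]
        beta_reduce at h
        omega

/-- Running Misra-Gries with capacity `k` on a stream of `N` items,
the number of decrement steps is at most `⌊N/(k+1)⌋`; in particular, when
`k = ⌈1/ε⌉` with `1/N ≤ ε ≤ 1`, the number of decrement steps is strictly
less than `εN`. -/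
theorem misraGries_decrement_bound {U : Type*} [Fintype U] [DecidableEq U]
    (S : List U) (k : ℕ) (hk : 0 < k) :
    mgDecs k (fun _ => 0) S ≤ S.length / (k + 1) ∧
    (∀ ε : ℝ, 0 < S.length → 1 / (S.length : ℝ) ≤ ε → ε ≤ 1 → k = ⌈1 / ε⌉₊ →
      (mgDecs k (fun _ => 0) S : ℝ) < ε * (S.length : ℝ)) := by
  have h := mg_invariant k S (fun _ => 0)
  simp only [Finset.sum_const_zero, add_zero] at h
  refine ⟨(Nat.le_div_iff_mul_le (Nat.succ_pos k)).2 h, ?_⟩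
  intro ε hN hε _ hkε
  have hN' : (0 : ℝ) < (S.length : ℝ) := by exact_mod_cast hN
  have hε0 : 0 < ε := lt_of_lt_of_le (by positivity) hε
  have hke : 1 / ε ≤ (k : ℝ) := by rw [hkε]; exact Nat.le_ceil _
  have h1 : 1 ≤ (k : ℝ) * ε := (div_le_iff₀ hε0).1 hke
  have hr : (mgDecs k (fun _ => 0) S : ℝ) * ((k : ℝ) + 1) ≤ (S.length : ℝ) := by
    exact_mod_cast h
  have hd : (0 : ℝ) ≤ (mgDecs k (fun _ => 0) S : ℝ) := Nat.cast_nonneg _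
  generalize (mgDecs k (fun _ => 0) S : ℝ) = d at hr hd ⊢
  rcases hd.eq_or_lt with hd | hd
  · rw [← hd]; positivity
  · have h2 := mul_le_mul_of_nonneg_left hr hε0.le
    have h3 := mul_le_mul_of_nonneg_left h1 hd.le
    have h4 := mul_pos hε0 hd
    nlinarith
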